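/- Let A be an abelian group of finite Prüfer rank and A = A_1 ⊇ A_2 ⊇ ⋯ a descending sequence of subgroups. Set = lim A/A_i. Then Â/pÂ and the p-torsion subgroup of are finite, with dim_{ℤ/p}(Â/pÂ) ≤ D_p(A) and dim_{ℤ/p}({a ∈ | pa = 0}) ≤ D_p(A). -/

import Mathlib

open TensorProduct

/-- The subgroup `pA = {x | ∃ a, p • a = x}` of an abelian group `A`. -/
def pMul (p : ℕ) (A : Type) [AddCommGroup A] : AddSubgroup A where
  carrier := {x | ∃ a : A, p • a = x}
  zero_mem' := ⟨0, smul_zero p⟩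
  add_mem' := by rintro _ _ ⟨a, rfl⟩ ⟨b, rfl⟩; exact ⟨a + b, smul_add p a b⟩
  neg_mem' := by rintro _ ⟨a, rfl⟩; exact ⟨-a, smul_neg p a⟩

/-- The `p`-torsion subgroup `{a ∈ A | p • a = 0}`. -/
def pTor (p : ℕ) (A : Type) [AddCommGroup A] : AddSubgroup A where
  carrier := {x | p • x = 0}
  zero_mem' := smul_zero p
  add_mem' := by
    intro a b ha hb; show p • (a + b) = 0
    rw [smul_add, ha, hb, add_zero]
  neg_mem' := by
    intro a ha; show p • (-a) = 0
    rw [smul_neg, ha, neg_zero]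

/-- The `ZMod p`-vector space structure on the `p`-torsion subgroup. -/
noncomputable instance pTorModule (p : ℕ) (A : Type) [AddCommGroup A] :
    Module (ZMod p) (pTor p A) :=
  AddCommGroup.zmodModule (fun x => Subtype.ext x.2)

/-- The `ZMod p`-vector space structure on `A/pA`. -/
noncomputable instance quotPModule (p : ℕ) (A : Type) [AddCommGroup A] :
    Module (ZMod p) (A ⧸ pMul p A) :=
  AddCommGroup.zmodModule (by
    intro x
    induction x using QuotientAddGroup.induction_on with
    | _ a =>
      rw [show (p • ((a : A) : A ⧸ pMul p A)) = (((p • a : A) : A) : A ⧸ pMul p A) from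
        (map_nsmul (QuotientAddGroup.mk' (pMul p A)) p a).symm]
      exact (QuotientAddGroup.eq_zero_iff _).2 ⟨a, rfl⟩)

/-- An abelian group has finite Prüfer rank if there is `r` such that every finitely
generated subgroup can be generated by `r` elements. -/
def HasFinitePruferRank (A : Type) [AddCommGroup A] : Prop :=
  ∃ r : ℕ, ∀ S : AddSubgroup A, S.FG →
    ∃ s : Finset A, s.card ≤ r ∧ AddSubgroup.closure (s : Set A) = S

/-- `D_p(A) = dim_ℚ (A ⊗ ℚ) + dim_{ℤ/p} {a ∈ A | pa = 0}`. -/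
noncomputable def Dp (p : ℕ) (A : Type) [AddCommGroup A] : ℕ :=
  Module.finrank ℚ (ℚ ⊗[ℤ] A) + Module.finrank (ZMod p) (pTor p A)

/-- The completion `Â = lim A/A_i` of `A` with respect to a descending filtration,
realized as the subgroup of compatible sequences in `Π i, A/A_i`. -/
def filtCompletion (A : Type) [AddCommGroup A] (S : ℕ → AddSubgroup A) (hS : Antitone S) :
    AddSubgroup (∀ i : ℕ, A ⧸ S i) where
  carrier := {x | ∀ i j : ℕ, ∀ h : i ≤ j,
    QuotientAddGroup.map (S j) (S i) (AddMonoidHom.id A) (by simpa using hS h) (x j) = x i}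
  zero_mem' := by intro i j h; simp
  add_mem' := by intro a b ha hb i j h; simp [map_add, ha i j h, hb i j h]
  neg_mem' := by intro a ha i j h; simp [map_neg, ha i j h]

lemma aux_rank_lt (A : Type) [AddCommGroup A] (hA : HasFinitePruferRank A) :
    Module.rank ℤ A < Cardinal.aleph0 := by
  obtain ⟨r, hr⟩ := hA
  refine lt_of_le_of_lt (rank_le (n := r) ?_) Cardinal.natCast_lt_aleph0
  intro s hs
  obtain ⟨t, ht, hts⟩ := hr (AddSubgroup.closure (s : Set A)) ⟨s, rfl⟩
  have h1 : Submodule.span ℤ (t : Set A) = Submodule.span ℤ (s : Set A) := by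
    apply Submodule.toAddSubgroup_injective
    rw [Submodule.span_int_eq_addSubgroupClosure, Submodule.span_int_eq_addSubgroupClosure, hts]
  have h2 := finrank_span_finset_le_card (R := ℤ) t
  have h3 := finrank_span_finset_eq_card hs
  unfold Set.finrank at h2
  rw [h1] at h2
  omega

lemma aux_tor_finite (p : ℕ) (hp : p.Prime) (A : Type) [AddCommGroup A]
    (hA : HasFinitePruferRank A) : Module.Finite (ZMod p) (pTor p A) := by
  have := Fact.mk hp
  obtain ⟨r, hr⟩ := hA
  rw [← Module.rank_lt_aleph0_iff]
  refine lt_of_le_of_lt (rank_le (n := r) ?_) Cardinal.natCast_lt_aleph0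
  intro s hs
  classical
  let s' : Finset A := s.image (fun x : pTor p A => x.1)
  obtain ⟨t, ht, hts⟩ := hr (AddSubgroup.closure (s' : Set A)) ⟨s', rfl⟩
  have hsub : AddSubgroup.closure (s' : Set A) ≤ pTor p A := by
    rw [AddSubgroup.closure_le]
    intro x hx
    simp only [s', Finset.coe_image, Set.mem_image] at hx
    obtain ⟨y, _, rfl⟩ := hx
    exact y.2
  have htmem : ∀ x ∈ t, x ∈ pTor p A := fun x hx => hsub (hts ▸ AddSubgroup.subset_closure hx)
  let t' : Finset (pTor p A) := t.attach.image (fun x => ⟨x.1, htmem x.1 x.2⟩)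
  have ht' : t'.card ≤ r := Finset.card_image_le.trans (by simpa using ht)
  have key : (s : Set (pTor p A)) ⊆ Submodule.span (ZMod p) (t' : Set (pTor p A)) := by
    intro x hx
    have hx1 : (x : A) ∈ AddSubgroup.closure (t : Set A) := by
      rw [hts]
      apply AddSubgroup.subset_closure
      simp only [s', Finset.coe_image, Set.mem_image]
      exact ⟨x, hx, rfl⟩
    have : ∀ y ∈ AddSubgroup.closure (t : Set A), ∀ hy : y ∈ pTor p A,
        (⟨y, hy⟩ : pTor p A) ∈ Submodule.span (ZMod p) (t' : Set (pTor p A)) := by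
      intro y hy
      have hle : AddSubgroup.closure (t : Set A) ≤
          (Submodule.span (ZMod p) (t' : Set (pTor p A))).toAddSubgroup.map (pTor p A).subtype := by
        rw [AddSubgroup.closure_le]
        intro z hz
        refine ⟨⟨z, htmem z hz⟩, ?_, rfl⟩
        apply Submodule.subset_span
        simp only [t', Finset.coe_image, Set.mem_image]
        exact ⟨⟨z, hz⟩, by simp, rfl⟩
      obtain ⟨w, hw, rfl⟩ := hle hy
      intro _
      exact hw
    exact this _ hx1 x.2
  have h2 := finrank_span_finset_le_card (R := ZMod p) t'
  have h3 := finrank_span_finset_eq_card hs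
  unfold Set.finrank at h2
  have h4 := Submodule.finrank_mono (Submodule.span_le.2 key)
  omega

lemma aux_core (p : ℕ) (hp : p.Prime) (A : Type) [AddCommGroup A]
    (hA : HasFinitePruferRank A) (k : ℕ) (f : Fin k → A)
    (h : ∀ c : Fin k → ℤ, ∑ j, c j • f j = 0 → ∀ j, (p : ℤ) ∣ c j) : k ≤ Dp p A := by
  have := Fact.mk hp
  have := aux_tor_finite p hp A hA
  have hp0 : (p : ℤ) ≠ 0 := by exact_mod_cast hp.ne_zero
  let φ : (Fin k → ℤ) →ₗ[ℤ] A := Fintype.linearCombination ℤ f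
  have hφ : ∀ c, φ c = ∑ j, c j • f j := fun c => Fintype.linearCombination_apply ℤ f c
  have hrk : Module.finrank ℤ φ.range + Module.finrank ℤ φ.ker = k := by
    have := Submodule.finrank_quotient_add_finrank φ.ker
    rw [LinearEquiv.finrank_eq φ.quotKerEquivRange] at this
    simpa using this
  have hr1 : Module.finrank ℤ φ.range ≤ Module.finrank ℚ (ℚ ⊗[ℤ] A) := by
    have e1 : Module.rank ℚ (ℚ ⊗[ℤ] A) = Module.rank ℤ A := by
      rw [← IsLocalizedModule.rank_eq (nonZeroDivisors ℤ) le_rfl (TensorProduct.mk ℤ ℚ A 1)]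
      exact IsLocalization.rank_eq ℚ (nonZeroDivisors ℤ) le_rfl
    have e2 : Module.finrank ℚ (ℚ ⊗[ℤ] A) = Module.finrank ℤ A := by
      simp only [Module.finrank, e1]
    rw [e2]
    exact Cardinal.toNat_le_toNat (Submodule.rank_le _) (aux_rank_lt A hA)
  have hr2 : Module.finrank ℤ φ.ker ≤ Module.finrank (ZMod p) (pTor p A) := by
    let b := Module.finBasis ℤ φ.ker
    have hb : ∀ i, ∃ c : Fin k → ℤ, (p : ℤ) • c = (b i : Fin k → ℤ) := by
      intro i
      have h1 := h (b i) (by rw [← hφ]; exact (b i).2)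
      choose c hc using h1
      exact ⟨c, by ext j; simp [hc j]⟩
    choose c hc using hb
    let v : Fin (Module.finrank ℤ φ.ker) → pTor p A := fun i => ⟨φ (c i), by
      show p • φ (c i) = 0
      have : φ ((p : ℤ) • c i) = 0 := by rw [hc]; exact (b i).2
      rw [map_smul] at this
      simpa using this⟩
    have hv : LinearIndependent (ZMod p) v := by
      rw [Fintype.linearIndependent_iff]
      intro g hg
      choose d hd using fun i => ZMod.intCast_surjective (g i)
      have h1 : φ (∑ i, d i • c i) = 0 := by
        have h2 := congrArg (pTor p A).subtype hg
        simp only [← hd, Int.cast_smul_eq_zsmul, map_sum, map_zsmul, map_zero] at h2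
        rw [map_sum]
        simp only [map_zsmul]
        exact h2
      let w : φ.ker := ⟨_, h1⟩
      have h3 : ∑ i, d i • b i = (p : ℤ) • w := by
        apply Subtype.ext
        simp only [w, Submodule.coe_sum, Submodule.coe_smul, ← hc, Finset.smul_sum]
        exact Finset.sum_congr rfl fun i _ => smul_comm _ _ _
      intro i
      have h4 := congrArg (fun z => b.repr z i) h3
      simp only [b.repr_sum_self, map_smul, Finsupp.smul_apply, smul_eq_mul] at h4
      rw [← hd, h4]
      simp
    simpa using hv.fintype_card_le_finrank
  unfold Dp
  omega

lemma aux_dim (p : ℕ) (hp : p.Prime) (V : Type) [AddCommGroup V] [Module (ZMod p) V] (n : ℕ)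
    (h : ∀ (k : ℕ) (v : Fin k → V),
      (∀ c : Fin k → ℤ, ∑ j, c j • v j = 0 → ∀ j, (p : ℤ) ∣ c j) → k ≤ n) :
    Finite V ∧ Module.finrank (ZMod p) V ≤ n := by
  have := Fact.mk hp
  have hr : Module.rank (ZMod p) V ≤ n := by
    apply rank_le
    intro s hs
    refine h s.card (fun j => (s.equivFin.symm j : V)) ?_
    intro c hc j
    have h1 := hs.comp s.equivFin.symm s.equivFin.symm.injective
    rw [Fintype.linearIndependent_iff] at h1
    have := h1 (fun j => (c j : ZMod p)) (by
      simpa only [Int.cast_smul_eq_zsmul, Function.comp] using hc) j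
    exact (ZMod.intCast_zmod_eq_zero_iff_dvd _ _).1 this
  have : Module.Finite (ZMod p) V := by
    rw [← Module.rank_lt_aleph0_iff]
    exact hr.trans_lt Cardinal.natCast_lt_aleph0
  exact ⟨Module.finite_of_finite (ZMod p), Module.finrank_le_of_rank_le hr⟩

lemma aux_lim (p : ℕ) (hp : p.Prime) (A : Type) [AddCommGroup A]
    (hA : HasFinitePruferRank A) (S : ℕ → AddSubgroup A) (hS : Antitone S)
    (P : ∀ i, AddSubgroup (A ⧸ S i))
    (hP : ∀ i j : ℕ, ∀ h : i ≤ j, ∀ x ∈ P j,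
      QuotientAddGroup.map (S j) (S i) (AddMonoidHom.id A) (by simpa using hS h) x ∈ P i)
    (k : ℕ) (x : Fin k → filtCompletion A S hS)
    (hpx : ∀ i j, p • (x j).1 i ∈ P i)
    (hx : ∀ c : Fin k → ℤ, (∀ i, (∑ j, c j • x j).1 i ∈ P i) → ∀ j, (p : ℤ) ∣ c j) :
    k ≤ Dp p A := by
  classical
  have := Fact.mk hp
  let val : (Fin k → ZMod p) → Fin k → ℤ := fun c j => ((c j).val : ℤ)
  let Q : ℕ → (Fin k → ℤ) → Prop := fun i c => (∑ j, c j • x j).1 i ∈ P i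
  have hQ : ∀ i j, i ≤ j → ∀ c, Q j c → Q i c := by
    intro i j hij c hc
    have := hP i j hij _ hc
    rwa [(∑ j, c j • x j).2 i j hij] at this
  have hex : ∀ c : Fin k → ZMod p, ∃ i, Q i (val c) → c = 0 := by
    intro c
    by_cases hc : c = 0
    · exact ⟨0, fun _ => hc⟩
    · by_contra! hcon
      apply hc
      have := hx (val c) (fun i => (hcon i).1)
      ext j
      have h2 := (ZMod.intCast_zmod_eq_zero_iff_dvd _ _).2 (this j)
      simpa [val] using h2
  choose N hN using hex
  let n := Finset.univ.sup N
  have hn : ∀ c, Q n (val c) → c = 0 := fun c hc =>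
    hN c (hQ _ _ (Finset.le_sup (Finset.mem_univ c)) _ hc)
  choose a ha using fun j => QuotientAddGroup.mk'_surjective (S n) ((x j).1 n)
  apply aux_core p hp A hA k a
  intro c hc j
  have h0 : (∑ j, c j • (x j).1 n) = 0 := by
    have := congrArg (QuotientAddGroup.mk' (S n)) hc
    simpa only [map_sum, map_zsmul, ha, map_zero] using this
  have hsum : ∀ c : Fin k → ℤ, (∑ j, c j • x j).1 n = ∑ j, c j • (x j).1 n := by
    intro c
    simp
  have h1 : Q n (val fun j => (c j : ZMod p)) := by
    show _ ∈ P n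
    rw [hsum, ← sub_zero (Finset.sum _ _), ← h0, ← Finset.sum_sub_distrib]
    refine sum_mem fun j _ => ?_
    rw [← sub_smul]
    have : (p : ℤ) ∣ (val (fun j => (c j : ZMod p)) j - c j) := by
      rw [← ZMod.intCast_zmod_eq_zero_iff_dvd]
      simp [val]
    obtain ⟨e, he⟩ := this
    rw [he, mul_comm, mul_smul]
    apply zsmul_mem
    simpa using hpx n j
  have := congrFun (hn _ h1) j
  exact (ZMod.intCast_zmod_eq_zero_iff_dvd _ _).1 this

lemma aux_quot_tor (p : ℕ) (hp : p.Prime) (A : Type) [AddCommGroup A]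
    (hA : HasFinitePruferRank A) (N : AddSubgroup A) : Finite (pTor p (A ⧸ N)) := by
  refine (aux_dim p hp _ (Dp p A) ?_).1
  intro k v hv
  choose a ha using fun j => QuotientAddGroup.mk'_surjective N (v j).1
  apply aux_core p hp A hA k a
  intro c hc
  apply hv c
  apply Subtype.ext
  have := congrArg (QuotientAddGroup.mk' N) hc
  simp only [map_sum, map_zsmul, ha, map_zero] at this
  simpa using this

lemma aux_mem (p : ℕ) (hp : p.Prime) (A : Type) [AddCommGroup A]
    (hA : HasFinitePruferRank A) (S : ℕ → AddSubgroup A) (hS : Antitone S)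
    (x : filtCompletion A S hS) (hx : ∀ i, x.1 i ∈ pMul p (A ⧸ S i)) :
    x ∈ pMul p (filtCompletion A S hS) := by
  let T : ℕ → Type := fun i => {y : A ⧸ S i // p • y = x.1 i}
  let tr : ∀ i j : ℕ, i ≤ j → (A ⧸ S j) →+ (A ⧸ S i) := fun i j h =>
    QuotientAddGroup.map (S j) (S i) (AddMonoidHom.id A) (by simpa using hS h)
  let F : CategoryTheory.Functor ℕᵒᵖ Type :=
    { obj := fun i => T i.unop
      map := fun {i j} h => TypeCat.ofHom fun y => ⟨tr _ _ (CategoryTheory.leOfHom h.unop) y.1, by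
        rw [← map_nsmul, y.2]
        exact x.2 _ _ (CategoryTheory.leOfHom h.unop)⟩
      map_id := by
        intro i
        ext y
        obtain ⟨y, hy⟩ := y
        induction y using QuotientAddGroup.induction_on with
        | _ a => rfl
      map_comp := by
        intro i j l f g
        ext y
        obtain ⟨y, hy⟩ := y
        induction y using QuotientAddGroup.induction_on with
        | _ a => rfl }
  have : ∀ i, Nonempty (F.obj i) := fun i => by
    obtain ⟨a, ha⟩ := hx i.unop
    exact ⟨⟨a, ha⟩⟩
  have : ∀ i, Finite (F.obj i) := fun i => by
    obtain ⟨a, ha⟩ := hx i.unop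
    have := aux_quot_tor p hp A hA (S i.unop)
    refine Finite.of_injective (β := pTor p (A ⧸ S i.unop)) (fun y : T i.unop => ⟨y.1 - a, ?_⟩) ?_
    · show p • (y.1 - a) = 0
      rw [smul_sub, y.2, ha, sub_self]
    · intro y z hyz
      apply Subtype.ext
      simpa using congrArg Subtype.val hyz
  obtain ⟨s, hs⟩ := nonempty_sections_of_finite_inverse_system F
  refine ⟨⟨fun i => (s (Opposite.op i)).1, ?_⟩, ?_⟩
  · intro i j h
    exact congrArg Subtype.val (hs (CategoryTheory.homOfLE h).op)
  · apply Subtype.ext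
    funext i
    exact (s (Opposite.op i)).2

/-- let `A` be an abelian group of finite Prüfer rank and
`A = A_0 ⊇ A_1 ⊇ ⋯` a descending sequence of subgroups, `Â = lim A/A_i`.  Then `Â/pÂ`
and the `p`-torsion of `Â` are finite, of `ℤ/p`-dimension at most `D_p(A)`. -/
theorem bousfield_stmt9 (p : ℕ) (hp : p.Prime) (A : Type) [AddCommGroup A]
    (hA : HasFinitePruferRank A) (S : ℕ → AddSubgroup A) (hS : Antitone S) (hS0 : S 0 = ⊤) :
    Finite ((filtCompletion A S hS) ⧸ pMul p (filtCompletion A S hS)) ∧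
    Module.finrank (ZMod p) ((filtCompletion A S hS) ⧸ pMul p (filtCompletion A S hS))
      ≤ Dp p A ∧
    Finite (pTor p (filtCompletion A S hS)) ∧
    Module.finrank (ZMod p) (pTor p (filtCompletion A S hS)) ≤ Dp p A := by
  rw [← and_assoc]
  constructor
  · apply aux_dim p hp
    intro k v hv
    choose x hx using fun j => QuotientAddGroup.mk'_surjective (pMul p (filtCompletion A S hS)) (v j)
    refine aux_lim p hp A hA S hS (fun i => pMul p (A ⧸ S i)) ?_ k x ?_ ?_
    · rintro i j h _ ⟨a, rfl⟩
      rw [map_nsmul]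
      exact ⟨_, rfl⟩
    · intro i j
      exact ⟨_, rfl⟩
    · intro c hc
      apply hv c
      have := aux_mem p hp A hA S hS _ hc
      rw [← QuotientAddGroup.eq_zero_iff] at this
      have h2 : QuotientAddGroup.mk' (pMul p (filtCompletion A S hS)) (∑ j, c j • x j) = 0 := this
      simpa only [map_sum, map_zsmul, hx] using h2
  · apply aux_dim p hp
    intro k v hv
    refine aux_lim p hp A hA S hS (fun i => ⊥) ?_ k (fun j => (v j).1) ?_ ?_
    · intro i j h x hx
      rw [AddSubgroup.mem_bot] at hx ⊢
      rw [hx, map_zero]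
    · intro i j
      have : p • (v j).1 = 0 := (v j).2
      have := congrFun (congrArg Subtype.val this) i
      simpa using this
    · intro c hc
      apply hv c
      apply Subtype.ext
      apply Subtype.ext
      funext i
      have := hc i
      rw [AddSubgroup.mem_bot] at this
      simpa using this
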